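/- Under the symbolwise construction (Context B), for all n ≥ 1: P_n^X ≤ 2^{−n(ℓ − γ_n)} and P_n^Y ≤ 2^{−n(ℓ − γ_n)}; consequently liminf_{n→∞} min{ −(1/n) log₂ P_n^X , −(1/n) log₂ P_n^Y } ≥ ℓ. -/

import Mathlib

open Finset Filter Real
open scoped BigOperators

noncomputable section

/-- `p` is a probability mass function on a finite type. -/
def IsPMF {α : Type*} [Fintype α] (p : α → ℝ) : Prop :=
  (∀ a, 0 ≤ p a) ∧ ∑ a, p a = 1

open scoped Classical in
/-- The distribution (pushforward pmf) of a random variable `X`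
defined on a finite sample space carrying the pmf `p`. -/
def distOf {Ω α : Type*} [Fintype Ω] (p : Ω → ℝ) (X : Ω → α) (x : α) : ℝ :=
  ∑ ω ∈ Finset.univ.filter fun ω => X ω = x, p ω

/-- Base-2 Shannon entropy of a pmf on a finite type
(the convention `0 · log₂ 0 = 0` holds since `Real.logb 2 0 = 0`). -/
def ent {α : Type*} [Fintype α] (q : α → ℝ) : ℝ :=
  -∑ x, q x * Real.logb 2 (q x)

/-- Base-2 entropy `H(X)` of a random variable `X` under pmf `p`. -/
def entRV {Ω α : Type*} [Fintype Ω] [Fintype α] (p : Ω → ℝ) (X : Ω → α) : ℝ :=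
  ent (distOf p X)

/-- Base-2 conditional entropy `H(X|Y) = H(X,Y) − H(Y)`. -/
def condEnt {Ω α β : Type*} [Fintype Ω] [Fintype α] [Fintype β]
    (p : Ω → ℝ) (X : Ω → α) (Y : Ω → β) : ℝ :=
  entRV p (fun ω => (X ω, Y ω)) - entRV p Y

/-- Base-2 mutual information `I(X;Y) = H(X) + H(Y) − H(X,Y)`. -/
def MI {Ω α β : Type*} [Fintype Ω] [Fintype α] [Fintype β]
    (p : Ω → ℝ) (X : Ω → α) (Y : Ω → β) : ℝ :=
  entRV p X + entRV p Y - entRV p (fun ω => (X ω, Y ω))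

/-- `X` and `Y` are independent random variables under the pmf `p`. -/
def IndepRV {Ω α β : Type*} [Fintype Ω] (p : Ω → ℝ) (X : Ω → α) (Y : Ω → β) : Prop :=
  ∀ a b, distOf p (fun ω => (X ω, Y ω)) (a, b) = distOf p X a * distOf p Y b

variable {𝒮 𝒳 𝒴 : Type}

/-- Single-letter sample-space pmf on `𝒮 × 𝒰`: the secret `S ~ PS` and an
independent uniform random number `U` on `𝒰`. -/
def p1 (PS : 𝒮 → ℝ) (𝒰 : Type) [Fintype 𝒰] : 𝒮 × 𝒰 → ℝ :=
  fun su => PS su.1 / (Fintype.card 𝒰 : ℝ)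

/-- The i.i.d. `n`-fold sample-space pmf on `Fin n → 𝒮 × 𝒰`. -/
def pn (PS : 𝒮 → ℝ) (𝒰 : Type) [Fintype 𝒰] (n : ℕ) :
    (Fin n → 𝒮 × 𝒰) → ℝ :=
  fun ω => ∏ i, p1 PS 𝒰 (ω i)

/-- The secret word `Sⁿ` as a random variable. -/
def SnB (𝒰 : Type) (n : ℕ) : (Fin n → 𝒮 × 𝒰) → (Fin n → 𝒮) :=
  fun ω i => (ω i).1

/-- The first share `Xⁿ` produced by the symbolwise encoder `φₙ*`. -/
def XnB (f : 𝒮 × 𝒰 → 𝒳 × 𝒴) (n : ℕ) : (Fin n → 𝒮 × 𝒰) → (Fin n → 𝒳) :=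
  fun ω i => (f (ω i)).1

/-- The second share `Yⁿ` produced by the symbolwise encoder `φₙ*`. -/
def YnB (f : 𝒮 × 𝒰 → 𝒳 × 𝒴) (n : ℕ) : (Fin n → 𝒮 × 𝒰) → (Fin n → 𝒴) :=
  fun ω i => (f (ω i)).2

open scoped Classical in
/-- The acceptance region `𝒜ₙ*`: pairs of positive probability whose
normalized information density exceeds `ℓ − γₙ`. -/
def AccB [Fintype 𝒮] [Fintype 𝒳] [Fintype 𝒴]
    (PS : 𝒮 → ℝ) (𝒰 : Type) [Fintype 𝒰] (f : 𝒮 × 𝒰 → 𝒳 × 𝒴)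
    (ℓ : ℝ) (γ : ℕ → ℝ) (n : ℕ) : Finset ((Fin n → 𝒳) × (Fin n → 𝒴)) :=
  Finset.univ.filter fun xy =>
    0 < distOf (pn PS 𝒰 n) (XnB f n) xy.1 * distOf (pn PS 𝒰 n) (YnB f n) xy.2 ∧
    ℓ - γ n < Real.logb 2
        (distOf (pn PS 𝒰 n) (fun ω => (XnB f n ω, YnB f n ω)) xy /
          (distOf (pn PS 𝒰 n) (XnB f n) xy.1 *
            distOf (pn PS 𝒰 n) (YnB f n) xy.2)) / (n : ℝ)

open scoped Classical in
/-- The symbolwise application `gₙ` of the single-letter decoder `g`. -/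
def gnB (g : 𝒳 × 𝒴 → Option 𝒮) (n : ℕ)
    (xy : (Fin n → 𝒳) × (Fin n → 𝒴)) : Option (Fin n → 𝒮) :=
  if h : ∀ i, (g (xy.1 i, xy.2 i)).isSome then
    some (fun i => (g (xy.1 i, xy.2 i)).get (h i))
  else none

open scoped Classical in
/-- The decoder `ψₙ*`: decode symbolwise inside `𝒜ₙ*`, declare `⊥` outside. -/
def psiB [Fintype 𝒮] [Fintype 𝒳] [Fintype 𝒴]
    (PS : 𝒮 → ℝ) (𝒰 : Type) [Fintype 𝒰] (f : 𝒮 × 𝒰 → 𝒳 × 𝒴)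
    (g : 𝒳 × 𝒴 → Option 𝒮) (ℓ : ℝ) (γ : ℕ → ℝ) (n : ℕ)
    (xy : (Fin n → 𝒳) × (Fin n → 𝒴)) : Option (Fin n → 𝒮) :=
  if xy ∈ AccB PS 𝒰 f ℓ γ n then gnB g n xy else none

open scoped Classical in
/-- The decoding error probability `Pₙᵉ = Pr{ψₙ*(φₙ*(Sⁿ,Uⁿ)) ≠ Sⁿ}`. -/
def PeB [Fintype 𝒮] [Fintype 𝒳] [Fintype 𝒴]
    (PS : 𝒮 → ℝ) (𝒰 : Type) [Fintype 𝒰] (f : 𝒮 × 𝒰 → 𝒳 × 𝒴)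
    (g : 𝒳 × 𝒴 → Option 𝒮) (ℓ : ℝ) (γ : ℕ → ℝ) (n : ℕ) : ℝ :=
  ∑ ω ∈ Finset.univ.filter (fun ω : Fin n → 𝒮 × 𝒰 =>
      psiB PS 𝒰 f g ℓ γ n (XnB f n ω, YnB f n ω) ≠ some (SnB 𝒰 n ω)),
    pn PS 𝒰 n ω

/-- `Pₙˣ`: maximal success probability of impersonating participant 1. -/
def PimpXB [Fintype 𝒮] [Fintype 𝒳] [Fintype 𝒴]
    (PS : 𝒮 → ℝ) (𝒰 : Type) [Fintype 𝒰] (f : 𝒮 × 𝒰 → 𝒳 × 𝒴)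
    (ℓ : ℝ) (γ : ℕ → ℝ) (n : ℕ) : ℝ :=
  ⨆ Q : {Q : (Fin n → 𝒳) → ℝ // IsPMF Q},
    ∑ xy ∈ AccB PS 𝒰 f ℓ γ n, Q.1 xy.1 * distOf (pn PS 𝒰 n) (YnB f n) xy.2

/-- `Pₙʸ`: maximal success probability of impersonating participant 2. -/
def PimpYB [Fintype 𝒮] [Fintype 𝒳] [Fintype 𝒴]
    (PS : 𝒮 → ℝ) (𝒰 : Type) [Fintype 𝒰] (f : 𝒮 × 𝒰 → 𝒳 × 𝒴)
    (ℓ : ℝ) (γ : ℕ → ℝ) (n : ℕ) : ℝ :=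
  ⨆ Q : {Q : (Fin n → 𝒴) → ℝ // IsPMF Q},
    ∑ xy ∈ AccB PS 𝒰 f ℓ γ n, distOf (pn PS 𝒰 n) (XnB f n) xy.1 * Q.1 xy.2

/-!
If `γ ≤ ℓ`, then `P_X(x) P_Y(y) ≤ 2^{-n(ℓ-γ)} P_{XY}(x, y)` on the acceptance region. Hence,
whatever word `x` an impersonator submits, the honest other share is accepted with probability at
most `2^{-n(ℓ-γ)} ∑_y P_{XY}(x, y) / P_X(x) ≤ 2^{-n(ℓ-γ)}`, and randomizing over `x` cannot help.
If `ℓ < γ`, the bound exceeds `1`. The other participant is handled by exchanging the two shares.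

As `logb 2 0 = 0` and the `liminf` of an unbounded real sequence may be a junk value, the success
probabilities must also be bounded below, by some `bⁿ` with `b > 0`. The mutual information is the
mean of the information density, so some letter pair of positive probability has density at least
`ℓ`; its constant words are always accepted, and an impersonator may submit one of them.
-/

section Pmf

variable {Ω α β : Type*} [Fintype Ω] {p : Ω → ℝ}

theorem isPMF_pi_single [DecidableEq Ω] (a : Ω) : IsPMF (Pi.single a (1 : ℝ)) :=
  ⟨(Pi.single_nonneg.2 zero_le_one : (0 : Ω → ℝ) ≤ Pi.single a 1), by simp⟩

theorem IsPMF.exists_sum_mul_le (hp : IsPMF p) (h : Ω → ℝ) :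
    ∃ ω, 0 < p ω ∧ ∑ ω', p ω' * h ω' ≤ h ω := by
  have sum_support (k : Ω → ℝ) : ∑ ω with 0 < p ω, p ω * k ω = ∑ ω, p ω * k ω :=
    sum_filter_of_ne fun ω _ hω => (hp.1 ω).lt_of_ne' (left_ne_zero_of_mul hω)
  have support_nonempty : (univ.filter fun ω => 0 < p ω).Nonempty := by
    refine nonempty_of_sum_ne_zero (f := fun ω => p ω * 1) ?_
    rw [sum_support]
    simp [hp.2]
  have weighted_mean :
      ∑ ω with 0 < p ω, p ω * ∑ ω', p ω' * h ω' ≤ ∑ ω with 0 < p ω, p ω * h ω := by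
    rw [sum_support, sum_support, ← sum_mul, hp.2, one_mul]
  obtain ⟨ω, hω, hle⟩ := exists_le_of_sum_le support_nonempty weighted_mean
  have hpos : 0 < p ω := (mem_filter.1 hω).2
  exact ⟨ω, hpos, le_of_mul_le_mul_left hle hpos⟩

theorem distOf_congr {X : Ω → α} {Y : Ω → β} {x : α} {y : β}
    (h : ∀ ω, X ω = x ↔ Y ω = y) : distOf p X x = distOf p Y y := by
  classical
  exact sum_congr (filter_congr fun ω _ => h ω) fun _ _ => rfl

theorem distOf_nonneg (hp : ∀ ω, 0 ≤ p ω) (X : Ω → α) (x : α) : 0 ≤ distOf p X x :=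
  sum_nonneg fun _ _ => hp _

theorem distOf_pos (hp : ∀ ω, 0 ≤ p ω) (X : Ω → α) {ω : Ω} (hω : 0 < p ω) :
    0 < distOf p X (X ω) :=
  sum_pos' (fun _ _ => hp _) ⟨ω, by simp, hω⟩

theorem sum_distOf_mul [Fintype α] (p : Ω → ℝ) (X : Ω → α) (h : α → ℝ) :
    ∑ x, distOf p X x * h x = ∑ ω, p ω * h (X ω) := by
  classical
  simp only [distOf, sum_mul, sum_filter]
  rw [sum_comm]
  simp

theorem isPMF_distOf [Fintype α] (hp : IsPMF p) (X : Ω → α) : IsPMF (distOf p X) :=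
  ⟨distOf_nonneg hp.1 X, by simpa [hp.2] using sum_distOf_mul p X fun _ => 1⟩

theorem sum_distOf_prodMk [Fintype β] (p : Ω → ℝ) (X : Ω → α) (Y : Ω → β) (x : α) :
    ∑ y, distOf p (fun ω => (X ω, Y ω)) (x, y) = distOf p X x := by
  classical
  simp only [distOf, sum_filter, Prod.mk.injEq]
  rw [sum_comm]
  refine sum_congr rfl fun ω _ => ?_
  by_cases h : X ω = x <;> simp [h]

theorem distOf_swap (p : Ω → ℝ) (X : Ω → α) (Y : Ω → β) (x : α) (y : β) :
    distOf p (fun ω => (Y ω, X ω)) (y, x) = distOf p (fun ω => (X ω, Y ω)) (x, y) :=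
  distOf_congr fun ω => by simp [and_comm]

end Pmf

section Product

variable {ι : Type*} [Fintype ι] [DecidableEq ι] {Ω α : ι → Type*} [∀ i, Fintype (Ω i)]

theorem isPMF_pi {p : ∀ i, Ω i → ℝ} (hp : ∀ i, IsPMF (p i)) :
    IsPMF fun ω : ∀ i, Ω i => ∏ i, p i (ω i) :=
  ⟨fun ω => prod_nonneg fun i _ => (hp i).1 (ω i), by
    rw [← Fintype.prod_sum]
    simp [(hp _).2]⟩

theorem distOf_pi (p : ∀ i, Ω i → ℝ) (X : ∀ i, Ω i → α i) (x : ∀ i, α i) :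
    distOf (fun ω : ∀ i, Ω i => ∏ i, p i (ω i)) (fun ω i => X i (ω i)) x =
      ∏ i, distOf (p i) (X i) (x i) := by
  classical
  simp only [distOf]
  rw [prod_univ_sum]
  refine sum_congr ?_ fun _ _ => rfl
  ext ω
  simp [funext_iff, Fintype.mem_piFinset]

end Product

section Information

variable {Ω α β : Type*} [Fintype Ω] {p : Ω → ℝ}

/-- Information density `log₂ (P_{XY}(x, y) / (P_X(x) P_Y(y)))` of two random variables. It takes
the junk value `0` at pairs where one of the probabilities involved vanishes. -/
def infoDensity (p : Ω → ℝ) (X : Ω → α) (Y : Ω → β) (x : α) (y : β) : ℝ :=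
  Real.logb 2 (distOf p (fun ω => (X ω, Y ω)) (x, y) / (distOf p X x * distOf p Y y))

theorem infoDensity_comm (p : Ω → ℝ) (X : Ω → α) (Y : Ω → β) (x : α) (y : β) :
    infoDensity p Y X y x = infoDensity p X Y x y := by
  simp only [infoDensity, distOf_swap p X Y, mul_comm]

theorem rpow_mul_distOf_le_of_lt_infoDensity (hp : ∀ ω, 0 ≤ p ω) {X : Ω → α} {Y : Ω → β}
    {x : α} {y : β} {t : ℝ} (ht : 0 ≤ t) (hpos : 0 < distOf p X x * distOf p Y y)
    (hlt : t < infoDensity p X Y x y) :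
    2 ^ t * (distOf p X x * distOf p Y y) ≤ distOf p (fun ω => (X ω, Y ω)) (x, y) := by
  have joint_pos : 0 < distOf p (fun ω => (X ω, Y ω)) (x, y) := by
    refine (distOf_nonneg hp _ _).lt_of_ne' fun h => ?_
    rw [infoDensity, h, zero_div, Real.logb_zero] at hlt
    exact hlt.not_ge ht
  rw [infoDensity, Real.lt_logb_iff_rpow_lt one_lt_two (div_pos joint_pos hpos),
    lt_div_iff₀ hpos] at hlt
  exact hlt.le

variable [Fintype α] [Fintype β]

theorem entRV_eq_neg_sum (p : Ω → ℝ) (X : Ω → α) :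
    entRV p X = -∑ ω, p ω * Real.logb 2 (distOf p X (X ω)) := by
  rw [entRV, ent, sum_distOf_mul p X fun x => Real.logb 2 (distOf p X x)]

theorem MI_eq_sum_infoDensity (hp : ∀ ω, 0 ≤ p ω) (X : Ω → α) (Y : Ω → β) :
    MI p X Y = ∑ ω, p ω * infoDensity p X Y (X ω) (Y ω) := by
  simp only [MI, entRV_eq_neg_sum, ← sum_neg_distrib, ← sum_add_distrib, ← sum_sub_distrib]
  refine sum_congr rfl fun ω _ => ?_
  rcases (hp ω).eq_or_lt with h | h
  · simp [← h]
  · have hX := distOf_pos hp X h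
    have hY := distOf_pos hp Y h
    have hXY := distOf_pos hp (fun ω => (X ω, Y ω)) h
    rw [infoDensity, Real.logb_div hXY.ne' (mul_pos hX hY).ne', Real.logb_mul hX.ne' hY.ne']
    ring

theorem MI_comm (p : Ω → ℝ) (X : Ω → α) (Y : Ω → β) : MI p Y X = MI p X Y := by
  simp only [MI, entRV_eq_neg_sum, distOf_swap p X Y, add_comm]

theorem exists_MI_le_infoDensity (hp : IsPMF p) (X : Ω → α) (Y : Ω → β) :
    ∃ ω, 0 < p ω ∧ MI p X Y ≤ infoDensity p X Y (X ω) (Y ω) := by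
  rw [MI_eq_sum_infoDensity hp.1]
  exact hp.exists_sum_mul_le _

end Information

section Impersonation

variable {α β : Type*} [Fintype α] {A : Finset (α × β)} {w : β → ℝ}

/-- Largest probability that a randomly chosen `x` and an independent `y` with weights `w` form
a pair in the acceptance region `A`, over all distributions of `x`. -/
def impersonationProb (A : Finset (α × β)) (w : β → ℝ) : ℝ :=
  ⨆ Q : {Q : α → ℝ // IsPMF Q}, ∑ xy ∈ A, Q.1 xy.1 * w xy.2

open scoped Classical in
theorem sum_mul_le_of_forall_slice_le [Fintype β] {Q : α → ℝ} (hQ : IsPMF Q) {C : ℝ}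
    (hA : ∀ x, ∑ y with (x, y) ∈ A, w y ≤ C) : ∑ xy ∈ A, Q xy.1 * w xy.2 ≤ C :=
  calc ∑ xy ∈ A, Q xy.1 * w xy.2
      = ∑ x, Q x * ∑ y with (x, y) ∈ A, w y := by
        rw [← filter_univ_mem A, sum_filter, Fintype.sum_prod_type]
        simp only [mul_sum, sum_filter, filter_univ_mem, mul_ite, mul_zero]
    _ ≤ ∑ x, Q x * C := sum_le_sum fun x _ => mul_le_mul_of_nonneg_left (hA x) (hQ.1 x)
    _ = C := by rw [← sum_mul, hQ.2, one_mul]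

open scoped Classical in
theorem impersonationProb_le [Fintype β] {C : ℝ} (hC : 0 ≤ C)
    (hA : ∀ x, ∑ y with (x, y) ∈ A, w y ≤ C) : impersonationProb A w ≤ C :=
  Real.iSup_le (fun Q => sum_mul_le_of_forall_slice_le Q.2 hA) hC

theorem le_impersonationProb [Finite β] (hw : ∀ y, 0 ≤ w y) {x : α} {y : β}
    (hxy : (x, y) ∈ A) : w y ≤ impersonationProb A w := by
  classical
  have := Fintype.ofFinite β
  have bdd : BddAbove (Set.range fun Q : {Q : α → ℝ // IsPMF Q} => ∑ xy ∈ A, Q.1 xy.1 * w xy.2) :=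
    ⟨∑ y, w y, Set.forall_mem_range.2 fun Q => sum_mul_le_of_forall_slice_le Q.2 fun _ =>
      sum_le_univ_sum_of_nonneg hw⟩
  have submit_x := isPMF_pi_single x
  calc w y = (Pi.single x 1 : α → ℝ) x * w y := by simp
    _ ≤ ∑ xy ∈ A, (Pi.single x 1 : α → ℝ) xy.1 * w xy.2 :=
        single_le_sum (f := fun xy : α × β => (Pi.single x 1 : α → ℝ) xy.1 * w xy.2)
          (fun xy _ => mul_nonneg (submit_x.1 xy.1) (hw xy.2)) hxy
    _ ≤ impersonationProb A w := le_ciSup bdd ⟨_, submit_x⟩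

theorem impersonationProb_le_rpow [Finite β] {Ω : Type*} [Fintype Ω] {p : Ω → ℝ} (hp : IsPMF p)
    {X : Ω → α} {Y : Ω → β} {t : ℝ}
    (hA : ∀ xy ∈ A, 0 < distOf p X xy.1 * distOf p Y xy.2 ∧ t < infoDensity p X Y xy.1 xy.2) :
    impersonationProb A (distOf p Y) ≤ 2 ^ (-t) := by
  classical
  have := Fintype.ofFinite β
  refine impersonationProb_le (by positivity) fun x => ?_
  rcases lt_or_ge t 0 with ht | ht
  -- For `t < 0` the region may contain pairs of joint probability `0`, through `logb 2 0 = 0`.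
  · calc ∑ y with (x, y) ∈ A, distOf p Y y
        ≤ ∑ y, distOf p Y y := sum_le_univ_sum_of_nonneg (distOf_nonneg hp.1 Y)
      _ = 1 := (isPMF_distOf hp Y).2
      _ ≤ 2 ^ (-t) := Real.one_le_rpow one_le_two (neg_nonneg.2 ht.le)
  have pointwise : ∀ y, (x, y) ∈ A →
      distOf p Y y ≤ 2 ^ (-t) * (distOf p (fun ω => (X ω, Y ω)) (x, y) / distOf p X x) := by
    intro y hxy
    obtain ⟨hpos, hlt⟩ := hA _ hxy
    have hx : 0 < distOf p X x := pos_of_mul_pos_left hpos (distOf_nonneg hp.1 Y y)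
    have := rpow_mul_distOf_le_of_lt_infoDensity hp.1 ht hpos hlt
    rw [Real.rpow_neg zero_le_two, inv_mul_eq_div, le_div_iff₀ (by positivity), le_div_iff₀ hx]
    linarith
  calc ∑ y with (x, y) ∈ A, distOf p Y y
      ≤ ∑ y with (x, y) ∈ A,
          2 ^ (-t) * (distOf p (fun ω => (X ω, Y ω)) (x, y) / distOf p X x) :=
        sum_le_sum fun y hy => pointwise y (mem_filter.1 hy).2
    _ ≤ ∑ y, 2 ^ (-t) * (distOf p (fun ω => (X ω, Y ω)) (x, y) / distOf p X x) :=
        sum_le_univ_sum_of_nonneg fun y => mul_nonneg (by positivity)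
          (div_nonneg (distOf_nonneg hp.1 _ _) (distOf_nonneg hp.1 _ _))
    _ = 2 ^ (-t) * (distOf p X x / distOf p X x) := by
        rw [← mul_sum, ← sum_div, sum_distOf_prodMk]
    _ ≤ 2 ^ (-t) := mul_le_of_le_one_right (by positivity) (div_self_le_one _)

end Impersonation

section Exponent

theorem le_neg_logb_div {P a t : ℝ} (ha : 0 < a) (hP : 0 < P) (h : P ≤ 2 ^ (-(a * t))) :
    t ≤ -Real.logb 2 P / a := by
  rw [le_div_iff₀ ha]
  linarith [(Real.logb_le_iff_le_rpow one_lt_two hP).2 h]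

theorem neg_logb_div_le {P b : ℝ} {n : ℕ} (hn : 1 ≤ n) (hb : 0 < b) (h : b ^ n ≤ P) :
    -Real.logb 2 P / n ≤ -Real.logb 2 b := by
  rw [div_le_iff₀ (by exact_mod_cast hn)]
  have := Real.logb_le_logb_of_le one_lt_two (by positivity) h
  rw [Real.logb_pow] at this
  linarith

theorem le_liminf_of_tendsto_of_le_of_le {ι : Type*} {F : Filter ι} [F.NeBot] {u v : ι → ℝ}
    {ℓ M : ℝ} (hv : Tendsto v F (nhds ℓ)) (hvu : ∀ᶠ i in F, v i ≤ u i)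
    (huM : ∀ᶠ i in F, u i ≤ M) : ℓ ≤ liminf u F := by
  rw [← hv.liminf_eq]
  exact liminf_le_liminf hvu hv.isBoundedUnder_ge
    (isBoundedUnder_of_eventually_le huM).isCoboundedUnder_ge

end Exponent

section Symbolwise

variable {𝒰 : Type} [Fintype 𝒰] {PS : 𝒮 → ℝ} {ℓ : ℝ} {γ : ℕ → ℝ} {n : ℕ}

theorem distOf_XnB [Fintype 𝒮] (PS : 𝒮 → ℝ) (f : 𝒮 × 𝒰 → 𝒳 × 𝒴) (x : Fin n → 𝒳) :
    distOf (pn PS 𝒰 n) (XnB f n) x = ∏ i, distOf (p1 PS 𝒰) (fun su => (f su).1) (x i) :=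
  distOf_pi (fun _ => p1 PS 𝒰) (fun _ su => (f su).1) x

theorem distOf_YnB [Fintype 𝒮] (PS : 𝒮 → ℝ) (f : 𝒮 × 𝒰 → 𝒳 × 𝒴) (y : Fin n → 𝒴) :
    distOf (pn PS 𝒰 n) (YnB f n) y = ∏ i, distOf (p1 PS 𝒰) (fun su => (f su).2) (y i) :=
  distOf_pi (fun _ => p1 PS 𝒰) (fun _ su => (f su).2) y

theorem distOf_XnB_YnB [Fintype 𝒮] (PS : 𝒮 → ℝ) (f : 𝒮 × 𝒰 → 𝒳 × 𝒴) (x : Fin n → 𝒳)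
    (y : Fin n → 𝒴) :
    distOf (pn PS 𝒰 n) (fun ω => (XnB f n ω, YnB f n ω)) (x, y) =
      ∏ i, distOf (p1 PS 𝒰) (fun su => ((f su).1, (f su).2)) (x i, y i) := by
  rw [← distOf_pi (fun _ => p1 PS 𝒰) (fun _ su => ((f su).1, (f su).2)) fun i => (x i, y i)]
  exact distOf_congr fun ω => by
    simp only [XnB, YnB, funext_iff, Prod.mk.injEq, forall_and]

theorem infoDensity_const_word [Fintype 𝒮] (PS : 𝒮 → ℝ) (f : 𝒮 × 𝒰 → 𝒳 × 𝒴) (x : 𝒳) (y : 𝒴) :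
    infoDensity (pn PS 𝒰 n) (XnB f n) (YnB f n) (fun _ => x) (fun _ => y) =
      n * infoDensity (p1 PS 𝒰) (fun su => (f su).1) (fun su => (f su).2) x y := by
  simp only [infoDensity, distOf_XnB, distOf_YnB, distOf_XnB_YnB, prod_const, card_univ,
    Fintype.card_fin, ← mul_pow, ← div_pow, Real.logb_pow]

variable [Fintype 𝒮] [Fintype 𝒳] [Fintype 𝒴] {f : 𝒮 × 𝒰 → 𝒳 × 𝒴}

theorem mem_AccB {x : Fin n → 𝒳} {y : Fin n → 𝒴} :
    (x, y) ∈ AccB PS 𝒰 f ℓ γ n ↔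
      0 < distOf (pn PS 𝒰 n) (XnB f n) x * distOf (pn PS 𝒰 n) (YnB f n) y ∧
        ℓ - γ n < infoDensity (pn PS 𝒰 n) (XnB f n) (YnB f n) x y / n := by
  simp [AccB, infoDensity]

theorem mem_AccB_swap {x : Fin n → 𝒳} {y : Fin n → 𝒴} :
    (y, x) ∈ AccB PS 𝒰 (Prod.swap ∘ f) ℓ γ n ↔ (x, y) ∈ AccB PS 𝒰 f ℓ γ n := by
  rw [mem_AccB, mem_AccB, mul_comm, infoDensity_comm]
  rfl

theorem PimpYB_eq_PimpXB_swap (f : 𝒮 × 𝒰 → 𝒳 × 𝒴) :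
    PimpYB PS 𝒰 f ℓ γ n = PimpXB PS 𝒰 (Prod.swap ∘ f) ℓ γ n :=
  iSup_congr fun _ => sum_equiv (Equiv.prodComm _ _) (fun _ => mem_AccB_swap.symm)
    fun _ _ => mul_comm _ _

variable [Nonempty 𝒰]

theorem isPMF_p1 (hPS : IsPMF PS) : IsPMF (p1 PS 𝒰) := by
  refine ⟨fun su => div_nonneg (hPS.1 _) (Nat.cast_nonneg _), ?_⟩
  simp [p1, Fintype.sum_prod_type, mul_div_cancel₀, hPS.2]

theorem isPMF_pn (hPS : IsPMF PS) : IsPMF (pn PS 𝒰 n) :=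
  isPMF_pi fun _ => isPMF_p1 hPS

theorem PimpXB_le_rpow (hPS : IsPMF PS) (hn : 1 ≤ n) :
    PimpXB PS 𝒰 f ℓ γ n ≤ 2 ^ (-((n : ℝ) * (ℓ - γ n))) := by
  refine impersonationProb_le_rpow (isPMF_pn hPS) (X := XnB f n) fun xy hxy => ?_
  obtain ⟨hpos, hlt⟩ := mem_AccB.1 hxy
  rw [lt_div_iff₀' (by exact_mod_cast hn)] at hlt
  exact ⟨hpos, hlt⟩

theorem const_word_mem_AccB (hPS : IsPMF PS) {su : 𝒮 × 𝒰} (hsu : 0 < p1 PS 𝒰 su)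
    (hlt : ℓ - γ n < infoDensity (p1 PS 𝒰) (fun su => (f su).1) (fun su => (f su).2)
      (f su).1 (f su).2) (hn : 1 ≤ n) :
    ((fun _ => (f su).1), (fun _ => (f su).2)) ∈ AccB PS 𝒰 f ℓ γ n := by
  have hX := distOf_pos (isPMF_p1 hPS).1 (fun su => (f su).1) hsu
  have hY := distOf_pos (isPMF_p1 hPS).1 (fun su => (f su).2) hsu
  have hn' : (n : ℝ) ≠ 0 := by positivity
  rw [mem_AccB, distOf_XnB, distOf_YnB, infoDensity_const_word, mul_div_cancel_left₀ _ hn']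
  exact ⟨mul_pos (prod_pos fun _ _ => hX) (prod_pos fun _ _ => hY), hlt⟩

theorem exists_pow_le_PimpXB (hPS : IsPMF PS) (hγ : ∀ n, 0 < γ n)
    (hMI : ℓ ≤ MI (p1 PS 𝒰) (fun su => (f su).1) (fun su => (f su).2)) :
    ∃ b > 0, ∀ n, 1 ≤ n → b ^ n ≤ PimpXB PS 𝒰 f ℓ γ n := by
  obtain ⟨su, hsu, hdensity⟩ := exists_MI_le_infoDensity (isPMF_p1 hPS) (fun su => (f su).1)
    (fun su => (f su).2)
  refine ⟨distOf (p1 PS 𝒰) (fun su => (f su).2) (f su).2, distOf_pos (isPMF_p1 hPS).1 _ hsu,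
    fun n hn => ?_⟩
  have accepted := const_word_mem_AccB (ℓ := ℓ) (γ := γ) hPS hsu (by linarith [hγ n]) hn
  have word_prob_le := le_impersonationProb (distOf_nonneg (isPMF_pn hPS).1 (YnB f n)) accepted
  rwa [distOf_YnB, prod_const, card_univ, Fintype.card_fin] at word_prob_le

end Symbolwise

theorem statement14_general {𝒮 𝒳 𝒴 : Type} [Fintype 𝒮] [Fintype 𝒳] [Fintype 𝒴]
    (𝒰 : Type) [Fintype 𝒰] [Nonempty 𝒰] (PS : 𝒮 → ℝ) (hPS : IsPMF PS) (ℓ : ℝ)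
    (f : 𝒮 × 𝒰 → 𝒳 × 𝒴)
    (hMI : MI (p1 PS 𝒰) (fun su => (f su).1) (fun su => (f su).2) = ℓ)
    (γ : ℕ → ℝ) (hγ : ∀ n, 0 < γ n) (hγ0 : Tendsto γ atTop (nhds 0)) :
    (∀ n, 1 ≤ n →
      PimpXB PS 𝒰 f ℓ γ n ≤ (2 : ℝ) ^ (-((n : ℝ) * (ℓ - γ n))) ∧
      PimpYB PS 𝒰 f ℓ γ n ≤ (2 : ℝ) ^ (-((n : ℝ) * (ℓ - γ n)))) ∧
    ℓ ≤ liminf (fun n => min (-Real.logb 2 (PimpXB PS 𝒰 f ℓ γ n) / (n : ℝ))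
        (-Real.logb 2 (PimpYB PS 𝒰 f ℓ γ n) / (n : ℝ))) atTop := by
  have hMI_swap : MI (p1 PS 𝒰) (fun su => (f su).2) (fun su => (f su).1) = ℓ :=
    (MI_comm _ _ _).trans hMI
  simp only [PimpYB_eq_PimpXB_swap]
  refine ⟨fun n hn => ⟨PimpXB_le_rpow hPS hn, PimpXB_le_rpow hPS hn⟩, ?_⟩
  obtain ⟨b, hb, hbX⟩ := exists_pow_le_PimpXB hPS hγ hMI.ge
  obtain ⟨c, hc, hcY⟩ := exists_pow_le_PimpXB (f := Prod.swap ∘ f) hPS hγ hMI_swap.ge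
  have hγℓ : Tendsto (fun n => ℓ - γ n) atTop (nhds ℓ) := by simpa using hγ0.const_sub ℓ
  refine le_liminf_of_tendsto_of_le_of_le (M := -Real.logb 2 b) hγℓ ?_ ?_ <;>
    filter_upwards [eventually_ge_atTop 1] with n hn
  · have hn' : (0 : ℝ) < n := by exact_mod_cast hn
    exact le_min
      (le_neg_logb_div hn' ((pow_pos hb n).trans_le (hbX n hn)) (PimpXB_le_rpow hPS hn))
      (le_neg_logb_div hn' ((pow_pos hc n).trans_le (hcY n hn)) (PimpXB_le_rpow hPS hn))
  · exact (min_le_left _ _).trans (neg_logb_div_le hn hb (hbX n hn))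

/-- under the symbolwise construction, the impersonation
success probabilities satisfy `Pₙˣ ≤ 2^{−n(ℓ−γₙ)}` and `Pₙʸ ≤ 2^{−n(ℓ−γₙ)}`
for all `n ≥ 1`; consequently the liminf of the smaller of the two exponents
is at least `ℓ`. -/
theorem statement14 {𝒮 𝒳 𝒴 : Type} [Fintype 𝒮] [Fintype 𝒳] [Fintype 𝒴]
    (𝒰 : Type) [Fintype 𝒰] [Nonempty 𝒰]
    (PS : 𝒮 → ℝ) (hPS : IsPMF PS) (ℓ : ℝ) (hℓ : 0 ≤ ℓ)
    (f : 𝒮 × 𝒰 → 𝒳 × 𝒴) (g : 𝒳 × 𝒴 → Option 𝒮)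
    (hHX : condEnt (p1 PS 𝒰) (fun su => su.1) (fun su => (f su).1)
      = entRV (p1 PS 𝒰) (fun su => su.1))
    (hHY : condEnt (p1 PS 𝒰) (fun su => su.1) (fun su => (f su).2)
      = entRV (p1 PS 𝒰) (fun su => su.1))
    (hHXY : condEnt (p1 PS 𝒰) (fun su => su.1) f = 0)
    (hMI : MI (p1 PS 𝒰) (fun su => (f su).1) (fun su => (f su).2) = ℓ)
    (hg : ∀ s u, 0 < PS s → g (f (s, u)) = some s)
    (hg' : ∀ xy, (∀ su, f su ≠ xy) → g xy = none)
    (γ : ℕ → ℝ) (hγ : ∀ n, 0 < γ n) (hγ0 : Tendsto γ atTop (nhds 0))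
    (hγtop : Tendsto (fun n : ℕ => Real.sqrt (n : ℝ) * γ n) atTop atTop) :
    (∀ n, 1 ≤ n →
      PimpXB PS 𝒰 f ℓ γ n ≤ (2 : ℝ) ^ (-((n : ℝ) * (ℓ - γ n))) ∧
      PimpYB PS 𝒰 f ℓ γ n ≤ (2 : ℝ) ^ (-((n : ℝ) * (ℓ - γ n)))) ∧
    ℓ ≤ liminf (fun n => min (-Real.logb 2 (PimpXB PS 𝒰 f ℓ γ n) / (n : ℝ))
        (-Real.logb 2 (PimpYB PS 𝒰 f ℓ γ n) / (n : ℝ))) atTop :=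
  statement14_general 𝒰 PS hPS ℓ f hMI γ hγ hγ0
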